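/- Let A be an associative algebra over a field k of characteristic 0 and let C^•(A) = ⊕_{n≥0} Hom_k(A^{⊗n}, A). The Gerstenhaber bracket [f,g] := f ∘ g - (-1)^{(m-1)(n-1)} g ∘ f on homogeneous f ∈ Hom_k(A^{⊗m},A), g ∈ Hom_k(A^{⊗n},A) makes the shifted space C^•(A)[1] into a graded Lie algebra: the bracket respects the (shifted) grading, is graded skew-symmetric, i.e. [f,g] = -(-1)^{(m-1)(n-1)}[g,f], and satisfies the graded Jacobi identity. -/

import Mathlib

open scoped BigOperators

/-- A Hochschild `m`-cochain `f ∈ Hom_k(A^{⊗m}, A)` (given as a multilinear map)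
encoded as a function on sequences, reading its `m` arguments off the first
`m` entries of the sequence. -/
def toC (k : Type*) {A : Type*} [CommSemiring k] [AddCommMonoid A] [Module k A]
    (m : ℕ) (f : MultilinearMap k (fun _ : Fin m => A) A) : (ℕ → A) → A :=
  fun v => f (fun j => v (j : ℕ))

/-- The circle product `f ∘ g = ∑ᵢ (-1)^{(i-1)(n+1)} f ∘ᵢ g` of an `m`-cochain and an
`n`-cochain (in the sequence encoding), where `f ∘ᵢ g` substitutes `g` into the `i`-th
slot of `f`. -/
noncomputable def circC (k : Type*) {A : Type*} [Field k] [AddCommGroup A] [Module k A]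
    (m n : ℕ) (F G : (ℕ → A) → A) : (ℕ → A) → A :=
  fun v => ∑ i : Fin m, ((-1 : k) ^ ((i : ℕ) * (n + 1))) •
    F (fun j => if j < (i : ℕ) then v j
      else if j = (i : ℕ) then G (fun t => v ((i : ℕ) + t))
      else v (j + n - 1))

/-- The Gerstenhaber bracket `[f,g] = f ∘ g - (-1)^{(m-1)(n-1)} g ∘ f` of an `m`-cochain
and an `n`-cochain, in the sequence encoding. -/
noncomputable def gerstC (k : Type*) {A : Type*} [Field k] [AddCommGroup A] [Module k A]
    (m n : ℕ) (F G : (ℕ → A) → A) : (ℕ → A) → A :=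
  circC k m n F G - ((-1 : k) ^ (((m : ℤ) - 1) * ((n : ℤ) - 1))) • circC k n m G F

/-- The sequence obtained from `v` by replacing the block of `n` entries starting at `i` by the
value of `G` on it. -/
def insertAt {A : Type*} (i n : ℕ) (G : (ℕ → A) → A) (v : ℕ → A) : ℕ → A :=
  fun j => if j < i then v j else if j = i then G (fun t => v (i + t)) else v (j + n - 1)

/-- The function `G` reads only the first `n` entries of its argument. -/
def DependsOnFirst {A : Type*} (n : ℕ) (G : (ℕ → A) → A) : Prop :=
  ∀ v w : ℕ → A, (∀ t, t < n → v t = w t) → G v = G w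

section Insertion

variable {A : Type*} {n p i j : ℕ} {G H : (ℕ → A) → A} {v : ℕ → A}

theorem insertAt_insertAt_nested {s : ℕ} (hs : s < n) :
    insertAt i n G (insertAt (i + s) p H v)
      = insertAt i (n + p - 1) (fun u => G (insertAt s p H u)) v := by
  funext l
  rcases lt_trichotomy l i with hl | rfl | hl
  · simp [insertAt, hl, show l < i + s by omega]
  · simp only [insertAt, lt_irrefl, if_false, if_true]
    congr 1
    funext t
    simp only [insertAt, Nat.add_lt_add_iff_left, Nat.add_left_cancel_iff, add_assoc]
    split_ifs
    · rfl
    · rfl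
    · congr 1
      omega
  · simp only [insertAt, show ¬ l < i by omega, show ¬ l = i by omega,
      show ¬ l + n - 1 < i + s by omega, show ¬ l + n - 1 = i + s by omega, if_false]
    congr 1
    omega

theorem insertAt_insertAt_disjoint (hG : DependsOnFirst n G) (hij : i < j) :
    insertAt i n G (insertAt (j + n - 1) p H v) = insertAt j p H (insertAt i n G v) := by
  funext l
  have hblock : G (fun t => insertAt (j + n - 1) p H v (i + t)) = G (fun t => v (i + t)) := by
    apply hG
    intro t ht
    simp [insertAt, show i + t < j + n - 1 by omega]
  rcases lt_trichotomy l i with hl | rfl | hl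
  · simp [insertAt, hl, show l < j + n - 1 by omega, show l < j by omega]
  · rw [insertAt, if_neg (lt_irrefl _), if_pos rfl, hblock]
    simp [insertAt, hij]
  · rcases lt_trichotomy l j with hl' | rfl | hl'
    · simp [insertAt, hl', show ¬ l < i by omega, show ¬ l = i by omega,
        show l + n - 1 < j + n - 1 by omega]
    · simp only [insertAt, show ¬ l < i by omega, show ¬ l = i by omega, lt_irrefl, if_false,
        if_true]
      congr 1
      funext t
      simp only [show ¬ l + t < i by omega, show ¬ l + t = i by omega, if_false]
      congr 1
      omega
    · simp only [insertAt, show ¬ l < i by omega, show ¬ l = i by omega, show ¬ l < j by omega,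
        show ¬ l = j by omega, show ¬ l + n - 1 < j + n - 1 by omega,
        show ¬ l + n - 1 = j + n - 1 by omega, show ¬ l + p - 1 < i by omega,
        show ¬ l + p - 1 = i by omega, if_false]
      congr 1
      omega

end Insertion

section Cochains

variable {k A : Type*} [Field k] [AddCommGroup A] [Module k A]

theorem toC_dependsOnFirst {m : ℕ} (f : MultilinearMap k (fun _ : Fin m => A) A) :
    DependsOnFirst m (toC k m f) := fun v w hvw => by
  simp only [toC]
  congr 1
  funext j
  exact hvw j j.2

theorem circC_apply (m n : ℕ) (F G : (ℕ → A) → A) (v : ℕ → A) :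
    circC k m n F G v
      = ∑ i ∈ Finset.range m, (-1 : k) ^ (i * (n + 1)) • F (insertAt i n G v) :=
  (Finset.sum_range fun i => (-1 : k) ^ (i * (n + 1)) • F (insertAt i n G v)).symm

theorem circC_dependsOnFirst {m n : ℕ} {F G : (ℕ → A) → A}
    (hF : DependsOnFirst m F) (hG : DependsOnFirst n G) :
    DependsOnFirst (m + n - 1) (circC k m n F G) := by
  intro v w hvw
  rw [circC_apply, circC_apply]
  refine Finset.sum_congr rfl fun i hi => ?_
  rw [Finset.mem_range] at hi
  congr 1
  apply hF
  intro l hl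
  simp only [insertAt]
  split_ifs
  · exact hvw _ (by omega)
  · exact hG _ _ fun t ht => hvw _ (by omega)
  · exact hvw _ (by omega)

theorem circC_sub_left (m n : ℕ) (F F' G : (ℕ → A) → A) :
    circC k m n (F - F') G = circC k m n F G - circC k m n F' G := by
  funext v
  simp [circC_apply, smul_sub]

theorem circC_smul_left (m n : ℕ) (c : k) (F G : (ℕ → A) → A) :
    circC k m n (c • F) G = c • circC k m n F G := by
  funext v
  simp [circC_apply, Finset.smul_sum, smul_comm c]

theorem toC_insertAt {m i : ℕ} (hi : i < m) (n : ℕ)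
    (f : MultilinearMap k (fun _ : Fin m => A) A) (G : (ℕ → A) → A) (v : ℕ → A) :
    toC k m f (insertAt i n G v)
      = f.toLinearMap (fun j => insertAt i n 0 v j) ⟨i, hi⟩ (G fun t => v (i + t)) := by
  simp only [toC, MultilinearMap.toLinearMap_apply]
  congr 1
  funext j
  by_cases hj : j = ⟨i, hi⟩
  · subst hj
    simp [insertAt]
  · have hj' : (j : ℕ) ≠ i := fun h => hj (Fin.ext h)
    simp [insertAt, hj, hj']

theorem circC_toC_sub_right {m : ℕ} (n : ℕ) (f : MultilinearMap k (fun _ : Fin m => A) A)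
    (G G' : (ℕ → A) → A) :
    circC k m n (toC k m f) (G - G')
      = circC k m n (toC k m f) G - circC k m n (toC k m f) G' := by
  funext v
  simp only [circC_apply, Pi.sub_apply, ← Finset.sum_sub_distrib]
  refine Finset.sum_congr rfl fun i hi => ?_
  simp only [toC_insertAt (Finset.mem_range.1 hi), Pi.sub_apply, map_sub, smul_sub]

theorem circC_toC_smul_right {m : ℕ} (n : ℕ) (f : MultilinearMap k (fun _ : Fin m => A) A)
    (c : k) (G : (ℕ → A) → A) :
    circC k m n (toC k m f) (c • G) = c • circC k m n (toC k m f) G := by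
  funext v
  simp only [circC_apply, Pi.smul_apply, Finset.smul_sum]
  refine Finset.sum_congr rfl fun i hi => ?_
  simp only [toC_insertAt (Finset.mem_range.1 hi), Pi.smul_apply, map_smul, smul_comm c]

theorem circC_toC_circC_apply {m : ℕ} (n p : ℕ) (f : MultilinearMap k (fun _ : Fin m => A) A)
    (G H : (ℕ → A) → A) (v : ℕ → A) :
    circC k m (n + p - 1) (toC k m f) (circC k n p G H) v
      = ∑ i ∈ Finset.range m, ∑ s ∈ Finset.range n,
          ((-1 : k) ^ (i * (n + 1)) * (-1) ^ ((i + s) * (p + 1))) •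
            toC k m f (insertAt i n G (insertAt (i + s) p H v)) := by
  rw [circC_apply]
  refine Finset.sum_congr rfl fun i hi => ?_
  rw [Finset.mem_range] at hi
  rw [toC_insertAt hi, circC_apply, map_sum, Finset.smul_sum]
  refine Finset.sum_congr rfl fun s hs => ?_
  rw [Finset.mem_range] at hs
  rw [insertAt_insertAt_nested hs, toC_insertAt hi, map_smul, smul_smul]
  congr 1
  obtain ⟨q, rfl⟩ : ∃ q, n = q + 1 := ⟨n - 1, by omega⟩
  rw [show q + 1 + p - 1 = q + p by omega, ← pow_add, ← pow_add,
    show i * (q + 1 + 1) + (i + s) * (p + 1)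
      = i * (q + p + 1) + s * (p + 1) + 2 * i by ring, pow_add _ _ (2 * i), pow_mul _ 2]
  simp

/-- The signed sum of all simultaneous insertions of `G` and `H` into two slots of an `m`-ary
operation `F`, with the slot of `G` to the left of the slot of `H`. -/
noncomputable def pairInsertion (k : Type*) {A : Type*} [Field k] [AddCommGroup A] [Module k A]
    (m n p : ℕ) (F G H : (ℕ → A) → A) (v : ℕ → A) : A :=
  ∑ i ∈ Finset.range m, ∑ j ∈ Finset.Ico (i + 1) m,
    ((-1 : k) ^ (i * (n + 1)) * (-1) ^ (j * (p + 1))) •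
      F (insertAt j p H (insertAt i n G v))

theorem circC_circC_toC_apply {m n : ℕ} (p : ℕ) (f : MultilinearMap k (fun _ : Fin m => A) A)
    {G : (ℕ → A) → A} (hG : DependsOnFirst n G) (H : (ℕ → A) → A) (v : ℕ → A) :
    circC k (m + n - 1) p (circC k m n (toC k m f) G) H v
      = pairInsertion k m p n (toC k m f) H G v
        + circC k m (n + p - 1) (toC k m f) (circC k n p G H) v
        + (-1 : k) ^ ((n + 1) * (p + 1)) • pairInsertion k m n p (toC k m f) G H v := by
  have hswap : pairInsertion k m p n (toC k m f) H G v
      = ∑ i ∈ Finset.range m, ∑ j ∈ Finset.range i,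
          ((-1 : k) ^ (i * (n + 1)) * (-1) ^ (j * (p + 1))) •
            toC k m f (insertAt i n G (insertAt j p H v)) := by
    rw [pairInsertion, Finset.sum_comm' (t' := Finset.range m) (s' := Finset.range)]
    · simp only [mul_comm]
    · intro x y
      simp only [Finset.mem_range, Finset.mem_Ico]
      omega
  rw [circC_toC_circC_apply, hswap, pairInsertion, Finset.smul_sum, ← Finset.sum_add_distrib,
    ← Finset.sum_add_distrib, circC_apply]
  simp only [circC_apply, Finset.smul_sum, smul_smul]
  rw [Finset.sum_comm]
  refine Finset.sum_congr rfl fun i hi => ?_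
  rw [Finset.mem_range] at hi
  rw [show m + n - 1 = i + n + (m - (i + 1)) by omega, Finset.sum_range_add,
    Finset.sum_range_add, Finset.sum_Ico_eq_sum_range]
  simp only [mul_comm ((-1 : k) ^ (i * (n + 1)))]
  congr 1
  refine Finset.sum_congr rfl fun t _ => ?_
  rw [← insertAt_insertAt_disjoint hG (show i < i + 1 + t by omega),
    show i + 1 + t + n - 1 = i + n + t by omega, ← mul_assoc, ← pow_add _ ((n + 1) * (p + 1)),
    show (n + 1) * (p + 1) + (i + 1 + t) * (p + 1) = (i + n + t) * (p + 1) + 2 * (p + 1) by ring,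
    pow_add _ _ (2 * (p + 1)), pow_mul _ 2]
  simp

theorem neg_one_zpow_shifted_mul (n p : ℕ) :
    (-1 : k) ^ (((n : ℤ) - 1) * ((p : ℤ) - 1)) = (-1 : k) ^ ((n + 1) * (p + 1)) := by
  rw [← zpow_natCast]
  push_cast
  rw [show ((n : ℤ) + 1) * (p + 1) = (n - 1) * (p - 1) + 2 * (n + p) by ring,
    zpow_add₀ (by simp), zpow_mul _ 2]
  simp

/-- The circle product is graded right pre-Lie: its associator is graded symmetric in the last two
arguments. -/
theorem circC_preLie {m n p : ℕ} (f : MultilinearMap k (fun _ : Fin m => A) A)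
    {G H : (ℕ → A) → A} (hG : DependsOnFirst n G) (hH : DependsOnFirst p H) :
    circC k (m + n - 1) p (circC k m n (toC k m f) G) H
        - circC k m (n + p - 1) (toC k m f) (circC k n p G H)
      = (-1 : k) ^ (((n : ℤ) - 1) * ((p : ℤ) - 1)) •
        (circC k (m + p - 1) n (circC k m p (toC k m f) H) G
          - circC k m (p + n - 1) (toC k m f) (circC k p n H G)) := by
  funext v
  simp only [Pi.sub_apply, Pi.smul_apply, circC_circC_toC_apply _ f hG,
    circC_circC_toC_apply _ f hH, neg_one_zpow_shifted_mul, mul_comm (p + 1)]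
  rcases neg_one_pow_eq_or k ((n + 1) * (p + 1)) with h | h <;> rw [h] <;> module

theorem gerstC_gerstC_toC {m n p : ℕ} (f : MultilinearMap k (fun _ : Fin m => A) A)
    (G H : (ℕ → A) → A) :
    gerstC k m (n + p - 1) (toC k m f) (gerstC k n p G H)
      = circC k m (n + p - 1) (toC k m f) (circC k n p G H)
        - (-1 : k) ^ (((n : ℤ) - 1) * ((p : ℤ) - 1)) •
          circC k m (p + n - 1) (toC k m f) (circC k p n H G)
        - ((-1 : k) ^ (((m : ℤ) - 1) * ((n : ℤ) - 1)) *
            (-1 : k) ^ (((p : ℤ) - 1) * ((m : ℤ) - 1))) •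
          (circC k (n + p - 1) m (circC k n p G H) (toC k m f)
            - (-1 : k) ^ (((n : ℤ) - 1) * ((p : ℤ) - 1)) •
              circC k (p + n - 1) m (circC k p n H G) (toC k m f)) := by
  have hsign : (-1 : k) ^ (((m : ℤ) - 1) * (((n + p - 1 : ℕ) : ℤ) - 1)) •
        circC k (n + p - 1) m (gerstC k n p G H) (toC k m f)
      = ((-1 : k) ^ (((m : ℤ) - 1) * ((n : ℤ) - 1)) *
          (-1 : k) ^ (((p : ℤ) - 1) * ((m : ℤ) - 1))) •
        circC k (n + p - 1) m (gerstC k n p G H) (toC k m f) := by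
    rcases Nat.eq_zero_or_pos (n + p) with h | h
    · rw [h]
      funext v
      simp [circC]
    · rw [← zpow_add₀ (by simp), Nat.cast_sub h]
      congr 2
      push_cast
      ring
  rw [gerstC, hsign]
  simp only [gerstC, circC_toC_sub_right, circC_toC_smul_right, circC_sub_left, circC_smul_left,
    add_comm p n]

theorem gerstC_skew (m n : ℕ) (F G : (ℕ → A) → A) :
    gerstC k m n F G
      = - ((-1 : k) ^ (((m : ℤ) - 1) * ((n : ℤ) - 1)) • gerstC k n m G F) := by
  simp only [gerstC, neg_one_zpow_shifted_mul, mul_comm (n + 1)]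
  rcases neg_one_pow_eq_or k ((m + 1) * (n + 1)) with h | h <;> rw [h] <;> module

theorem gerstC_dependsOnFirst {m n : ℕ} {F G : (ℕ → A) → A}
    (hF : DependsOnFirst m F) (hG : DependsOnFirst n G) :
    DependsOnFirst (m + n - 1) (gerstC k m n F G) := by
  intro v w hvw
  simp only [gerstC, Pi.sub_apply, Pi.smul_apply]
  rw [circC_dependsOnFirst hF hG v w hvw,
    circC_dependsOnFirst hG hF v w (by rwa [add_comm n m])]

theorem gerstC_jacobi {m n p : ℕ} (f : MultilinearMap k (fun _ : Fin m => A) A)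
    (g : MultilinearMap k (fun _ : Fin n => A) A) (h : MultilinearMap k (fun _ : Fin p => A) A) :
    (-1 : k) ^ (((m : ℤ) - 1) * ((p : ℤ) - 1)) •
          gerstC k m (n + p - 1) (toC k m f) (gerstC k n p (toC k n g) (toC k p h))
        + (-1 : k) ^ (((n : ℤ) - 1) * ((m : ℤ) - 1)) •
          gerstC k n (p + m - 1) (toC k n g) (gerstC k p m (toC k p h) (toC k m f))
        + (-1 : k) ^ (((p : ℤ) - 1) * ((n : ℤ) - 1)) •
          gerstC k p (m + n - 1) (toC k p h) (gerstC k m n (toC k m f) (toC k n g))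
      = 0 := by
  have hf := toC_dependsOnFirst f
  have hg := toC_dependsOnFirst g
  have hh := toC_dependsOnFirst h
  have preLie_f := sub_eq_iff_eq_add.1 (circC_preLie f hg hh)
  have preLie_g := sub_eq_iff_eq_add.1 (circC_preLie g hh hf)
  have preLie_h := sub_eq_iff_eq_add.1 (circC_preLie h hf hg)
  rw [gerstC_gerstC_toC, gerstC_gerstC_toC, gerstC_gerstC_toC, preLie_f, preLie_g, preLie_h]
  simp only [neg_one_zpow_shifted_mul, mul_comm (p + 1), mul_comm (n + 1) (m + 1)]
  rcases neg_one_pow_eq_or k ((m + 1) * (n + 1)) with h₁ | h₁ <;>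
  rcases neg_one_pow_eq_or k ((n + 1) * (p + 1)) with h₂ | h₂ <;>
  rcases neg_one_pow_eq_or k ((m + 1) * (p + 1)) with h₃ | h₃ <;>
  rw [h₁, h₂, h₃] <;> module

end Cochains

/-- The Gerstenhaber bracket makes the (shifted) Hochschild cochain complex
`C^•(A)[1]` into a graded Lie algebra: it respects the grading (the bracket of an
`m`-cochain and an `n`-cochain is an `(m+n-1)`-cochain), is graded skew-symmetric, and
satisfies the graded Jacobi identity (with respect to the shifted degrees `m-1`, `n-1`,
`p-1`). -/
theorem stmt_9 {k A : Type*} [Field k] [CharZero k] [Ring A] [Algebra k A] :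
    (∀ (m n : ℕ) (f : MultilinearMap k (fun _ : Fin m => A) A)
        (g : MultilinearMap k (fun _ : Fin n => A) A) (v w : ℕ → A),
      (∀ j, j < m + n - 1 → v j = w j) →
      gerstC k m n (toC k m f) (toC k n g) v = gerstC k m n (toC k m f) (toC k n g) w) ∧
    (∀ (m n : ℕ) (f : MultilinearMap k (fun _ : Fin m => A) A)
        (g : MultilinearMap k (fun _ : Fin n => A) A),
      gerstC k m n (toC k m f) (toC k n g)
        = - (((-1 : k) ^ (((m : ℤ) - 1) * ((n : ℤ) - 1))) •
            gerstC k n m (toC k n g) (toC k m f))) ∧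
    (∀ (m n p : ℕ) (f : MultilinearMap k (fun _ : Fin m => A) A)
        (g : MultilinearMap k (fun _ : Fin n => A) A)
        (h : MultilinearMap k (fun _ : Fin p => A) A),
      ((-1 : k) ^ (((m : ℤ) - 1) * ((p : ℤ) - 1))) •
          gerstC k m (n + p - 1) (toC k m f) (gerstC k n p (toC k n g) (toC k p h))
        + ((-1 : k) ^ (((n : ℤ) - 1) * ((m : ℤ) - 1))) •
          gerstC k n (p + m - 1) (toC k n g) (gerstC k p m (toC k p h) (toC k m f))
        + ((-1 : k) ^ (((p : ℤ) - 1) * ((n : ℤ) - 1))) •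
          gerstC k p (m + n - 1) (toC k p h) (gerstC k m n (toC k m f) (toC k n g))
        = 0) := by
  exact ⟨fun _ _ f g => gerstC_dependsOnFirst (toC_dependsOnFirst f) (toC_dependsOnFirst g),
    fun m n _ _ => gerstC_skew m n _ _, fun _ _ _ => gerstC_jacobi⟩
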